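/- Let N : ℕ × ℕ → ℝ be defined by N_{00} = 1, N_{0j} = 0 and N_{i0} = 0 for i, j ≥ 1, N_{ij} = (-1)^{j-i} \binom{⌊(i-1)/2⌋ + j - i}{⌊(i-1)/2⌋} for 1 ≤ i ≤ j, and N_{ij} = 0 for i > j ≥ 1. Let M : ℕ × ℕ → ℝ be defined by M_{00} = 1, M_{0j} = 0 and M_{i0} = 0 for i, j ≥ 1, M_{ij} = \binom{⌊j/2⌋}{j-i} for 1 ≤ i ≤ j, and M_{ij} = 0 for i > j ≥ 1. Then N M = I, that is, for all i, j ∈ ℕ, ∑_{l=i}^{j} N_{il} M_{lj} equals 1 if i = j and 0 otherwise. -/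

import Mathlib

/-- The matrix `N` of Lemma 3.1. -/
noncomputable def Nmat (i j : ℕ) : ℝ :=
  if i = 0 ∧ j = 0 then 1
  else if i = 0 ∨ j = 0 then 0
  else if i ≤ j then (-1) ^ (j - i) * (Nat.choose ((i - 1) / 2 + (j - i)) ((i - 1) / 2) : ℝ)
  else 0

/-- The matrix `M` of Lemma 3.2. -/
noncomputable def Mmat (i j : ℕ) : ℝ :=
  if i = 0 ∧ j = 0 then 1
  else if i = 0 ∨ j = 0 then 0
  else if i ≤ j then (Nat.choose (j / 2) (j - i) : ℝ)
  else 0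

/-!
Off the zeroth row and column the entries of both matrices are generalized binomial coefficients:
by upper negation `N i l = C(-⌈i/2⌉, l - i)`, while `M l j = C(⌊j/2⌋, j - l)`. The
Chu-Vandermonde identity then sums the product to `C(⌊j/2⌋ - ⌈i/2⌉, j - i)`. For `i < j` the
upper index is a natural number strictly smaller than `j - i`, so this vanishes, and for `i = j`
it is `1`.
-/

section ChuVandermonde

open Finset

lemma sum_Icc_eq_sum_antidiagonal {A : Type*} [AddCommMonoid A] {i j : ℕ} (hij : i ≤ j)
    (f : ℕ → ℕ → A) :
    ∑ l ∈ Icc i j, f (l - i) (j - l) = ∑ p ∈ antidiagonal (j - i), f p.1 p.2 := by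
  rw [Nat.sum_antidiagonal_eq_sum_range_succ, ← Ico_add_one_right_eq_Icc, sum_Ico_eq_sum_range,
    Nat.sub_add_comm hij]
  simp only [Nat.add_sub_cancel_left, Nat.sub_add_eq, Nat.succ_eq_add_one]

variable {R : Type*} [Ring R] [BinomialRing R]

lemma sum_Icc_ringChoose_mul_ringChoose {r s : R} (h : Commute r s) {i j : ℕ} (hij : i ≤ j) :
    ∑ l ∈ Icc i j, Ring.choose r (l - i) * Ring.choose s (j - l) =
      Ring.choose (r + s) (j - i) := by
  rw [Ring.add_choose_eq _ h]
  exact sum_Icc_eq_sum_antidiagonal hij fun a b => Ring.choose r a * Ring.choose s b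

variable (R)

lemma ringChoose_neg_natCast_add_one (a k : ℕ) :
    Ring.choose (-((a + 1 : ℕ) : R)) k = (-1) ^ k * ((a + k).choose a : R) := by
  have upper_index : ((a + 1 : ℕ) : R) + k - 1 = (a + k : ℕ) := by
    push_cast
    abel
  rw [Ring.choose_neg, upper_index, Ring.choose_natCast, Nat.choose_symm_add, Units.smul_def,
    zsmul_eq_mul, Int.coe_negOnePow_natCast, Int.cast_pow, Int.cast_neg, Int.cast_one]

lemma ringChoose_neg_ceil_half_add_floor_half {i j : ℕ} (hij : i ≤ j) :
    Ring.choose (-(((i + 1) / 2 : ℕ) : R) + ((j / 2 : ℕ) : R)) (j - i) =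
      if i = j then 1 else 0 := by
  rcases hij.eq_or_lt with rfl | hlt
  · rw [Nat.sub_self, Ring.choose_zero_right, if_pos rfl]
  · have half_le : (i + 1) / 2 ≤ j / 2 := Nat.div_le_div_right hlt
    have lt_sub : j / 2 - (i + 1) / 2 < j - i := by lia
    rw [neg_add_eq_sub, ← Nat.cast_sub half_le, Ring.choose_natCast,
      Nat.choose_eq_zero_of_lt lt_sub, Nat.cast_zero, if_neg hlt.ne]

end ChuVandermonde

lemma Nmat_zero_left (l : ℕ) : Nmat 0 l = if l = 0 then 1 else 0 := by
  simp [Nmat]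

lemma Mmat_zero_left (j : ℕ) : Mmat 0 j = if j = 0 then 1 else 0 := by
  simp [Mmat]

lemma Nmat_eq_ringChoose {i l : ℕ} (hi : 0 < i) (hil : i ≤ l) :
    Nmat i l = Ring.choose (-(((i + 1) / 2 : ℕ) : ℝ)) (l - i) := by
  have ceil_half : (i + 1) / 2 = (i - 1) / 2 + 1 := by lia
  rw [ceil_half, ringChoose_neg_natCast_add_one]
  simp [Nmat, hi.ne', (hi.trans_le hil).ne', hil]

lemma Mmat_eq_ringChoose {l j : ℕ} (hl : 0 < l) (hlj : l ≤ j) :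
    Mmat l j = Ring.choose ((j / 2 : ℕ) : ℝ) (j - l) := by
  rw [Ring.choose_natCast]
  simp [Mmat, hl.ne', (hl.trans_le hlj).ne', hlj]

lemma sum_Nmat_zero_mul_Mmat (j : ℕ) :
    ∑ l ∈ Finset.Icc 0 j, Nmat 0 l * Mmat l j = if 0 = j then 1 else 0 := by
  simp [Nmat_zero_left, Mmat_zero_left, eq_comm]

lemma sum_Nmat_mul_Mmat {i j : ℕ} (hi : 0 < i) (hij : i ≤ j) :
    ∑ l ∈ Finset.Icc i j, Nmat i l * Mmat l j =
      Ring.choose (-(((i + 1) / 2 : ℕ) : ℝ) + ((j / 2 : ℕ) : ℝ)) (j - i) := by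
  rw [← sum_Icc_ringChoose_mul_ringChoose (Commute.all _ _) hij]
  refine Finset.sum_congr rfl fun l hl => ?_
  obtain ⟨hil, hlj⟩ := Finset.mem_Icc.mp hl
  rw [Nmat_eq_ringChoose hi hil, Mmat_eq_ringChoose (hi.trans_le hil) hlj]

/-- `N M = I`. -/
theorem stmt3 (i j : ℕ) :
    (∑ l ∈ Finset.Icc i j, Nmat i l * Mmat l j) = if i = j then 1 else 0 := by
  rcases i.eq_zero_or_pos with rfl | hi
  · exact sum_Nmat_zero_mul_Mmat j
  rcases lt_or_ge j i with hji | hij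
  · rw [Finset.Icc_eq_empty_of_lt hji, Finset.sum_empty, if_neg hji.ne']
  · rw [sum_Nmat_mul_Mmat hi hij, ringChoose_neg_ceil_half_add_floor_half ℝ hij]
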